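/- Let L be a first-order language and let M and N be L-structures. Then Th_{∀∃}(M) ⊆ Th_{∀∃}(N) if and only if: there exists an elementary extension N* of N such that for every finite subset B of N* there exist an elementary extension M_B of M and an L-embedding f_B : M_B → N* with B contained in the image of f_B. -/

import Mathlib

open FirstOrder Language

universe u v w x

/-- Apply existential quantifiers to the last `s` bound variables of a bounded formula. -/
def FirstOrder.Language.BoundedFormula.exsN {L : FirstOrder.Language} {α : Type*} {m : ℕ} :
    ∀ {s : ℕ}, L.BoundedFormula α (m + s) → L.BoundedFormula α m
  | 0, φ => φ
  | _ + 1, φ => φ.ex.exsN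

/-- `Th_{∀∃}(M) ⊆ Th_{∀∃}(N)`: every sentence of the form `∀ x₁ … xₘ ∃ y₁ … yₛ ψ` with `ψ`
quantifier-free that holds in `M` also holds in `N`. -/
def AETheorySub (L : FirstOrder.Language) (M : Type*) (N : Type*)
    [L.Structure M] [L.Structure N] : Prop :=
  ∀ (m s : ℕ) (ψ : L.BoundedFormula Empty (m + s)), ψ.IsQF →
    M ⊨ (ψ.exsN.alls : L.Sentence) → N ⊨ (ψ.exsN.alls : L.Sentence)

open Filter

namespace AEProof

lemma realize_exsN {L : FirstOrder.Language.{u, v}} {α : Type*} {M : Type*} [L.Structure M] {m : ℕ} :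
    ∀ {s : ℕ} (φ : L.BoundedFormula α (m + s)) (v : α → M) (xs : Fin m → M),
      φ.exsN.Realize v xs ↔ ∃ ys : Fin s → M, φ.Realize v (Fin.append xs ys)
  | 0, φ, v, xs => by
      have : ∀ ys : Fin 0 → M, Fin.append xs ys = xs := by
        intro ys
        funext i
        exact Fin.append_left xs ys i
      simp only [BoundedFormula.exsN, this, exists_const]
  | s + 1, φ, v, xs => by
      rw [BoundedFormula.exsN, realize_exsN]
      simp only [BoundedFormula.realize_ex]
      constructor
      · rintro ⟨ys, a, h⟩
        refine ⟨Fin.snoc ys a, ?_⟩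
        rw [Fin.append_snoc]
        exact h
      · rintro ⟨ys, h⟩
        refine ⟨Fin.init ys, ys (Fin.last s), ?_⟩
        have := Fin.append_snoc xs (Fin.init ys) (ys (Fin.last s))
        rw [Fin.snoc_init_self] at this
        rw [this] at h
        exact h

lemma sub_iff {L : FirstOrder.Language.{u, v}} {M : Type*} [L.Structure M] {m s : ℕ}
    (ψ : L.BoundedFormula Empty (m + s)) :
    M ⊨ (ψ.exsN.alls : L.Sentence) ↔
      ∀ xs : Fin m → M, ∃ ys : Fin s → M, ψ.Realize default (Fin.append xs ys) := by
  rw [Sentence.Realize, Formula.Realize]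
  refine BoundedFormula.realize_alls.trans ?_
  simp only [realize_exsN]

lemma qf_iSup {L : FirstOrder.Language.{u, v}} {α β : Type*} [Finite β] {n : ℕ}
    (f : β → L.BoundedFormula α n)
    (hf : ∀ b, (f b).IsQF) : (BoundedFormula.iSup f).IsQF := by
  have key : ∀ l : List β, ((l.map f).foldr (· ⊔ ·) ⊥).IsQF := by
    intro l
    induction l with
    | nil => exact BoundedFormula.isQF_bot
    | cons a l ih => exact (hf a).sup ih
  exact key _

lemma qf_iInf {L : FirstOrder.Language.{u, v}} {α β : Type*} [Finite β] {n : ℕ}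
    (f : β → L.BoundedFormula α n)
    (hf : ∀ b, (f b).IsQF) : (BoundedFormula.iInf f).IsQF := by
  have key : ∀ l : List β, ((l.map f).foldr (· ⊓ ·) ⊤).IsQF := by
    intro l
    induction l with
    | nil => exact BoundedFormula.IsQF.top
    | cons a l ih => exact (hf a).inf ih
  exact key _

open Classical in
lemma ae_transfer {L : FirstOrder.Language.{u, v}} {M : Type w} {N : Type x} [L.Structure M] [L.Structure N]
    (h : AETheorySub L M N) {n : ℕ} {α : Type*} [Nonempty α]
    (φ : L.Formula (Fin n ⊕ α)) (hφ : φ.IsQF)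
    (hM : ∀ x : Fin n → M, ∃ y : α → M, φ.Realize (Sum.elim x y)) (b : Fin n → N) :
    ∃ y : α → N, φ.Realize (Sum.elim b y) := by
  obtain ⟨a0⟩ := ‹Nonempty α›
  let T : Finset α := insert a0 (φ.freeVarFinset.toRight)
  let e : T ≃ Fin T.card := T.equivFin
  let k : α → Fin T.card := fun a =>
    if ha : a ∈ T then e ⟨a, ha⟩ else e ⟨a0, Finset.mem_insert_self _ _⟩
  let g : Fin n ⊕ α → Empty ⊕ Fin (n + T.card) :=
    Sum.elim (fun i => Sum.inr (Fin.castAdd _ i)) (fun a => Sum.inr (Fin.natAdd n (k a)))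
  let ψ : L.BoundedFormula Empty (n + T.card) := BoundedFormula.relabel g φ
  have hψ : ψ.IsQF := hφ.relabel g
  have key : ∀ {K : Type x} [L.Structure K] (x : Fin n → K) (z : Fin T.card → K),
      ψ.Realize default (Fin.append x z) ↔ φ.Realize (Sum.elim x (z ∘ k)) := by
    intro K _ x z
    have := BoundedFormula.realize_relabel (φ := φ) (g := g) (v := (default : Empty → K))
      (xs := (show Fin (n + T.card + 0) → K from (Fin.append x z : Fin (n + T.card) → K)))
    refine this.trans ?_
    rw [Formula.Realize, iff_iff_eq]
    congr 1
    · funext i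
      rcases i with i | a
      · exact Fin.append_left x z i
      · exact Fin.append_right x z (k a)
    · exact Subsingleton.elim _ _
  have key' : ∀ {K : Type w} [L.Structure K] (x : Fin n → K) (z : Fin T.card → K),
      ψ.Realize default (Fin.append x z) ↔ φ.Realize (Sum.elim x (z ∘ k)) := by
    intro K _ x z
    have := BoundedFormula.realize_relabel (φ := φ) (g := g) (v := (default : Empty → K))
      (xs := (show Fin (n + T.card + 0) → K from (Fin.append x z : Fin (n + T.card) → K)))
    refine this.trans ?_
    rw [Formula.Realize, iff_iff_eq]
    congr 1
    · funext i
      rcases i with i | a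
      · exact Fin.append_left x z i
      · exact Fin.append_right x z (k a)
    · exact Subsingleton.elim _ _
  have hN := h n T.card ψ hψ ((sub_iff ψ).2 ?_)
  · obtain ⟨z, hz⟩ := (sub_iff ψ).1 hN b
    exact ⟨z ∘ k, (key b z).1 hz⟩
  · intro x
    obtain ⟨y, hy⟩ := hM x
    refine ⟨fun j => y (e.symm j), (key' x _).2 ?_⟩
    have h1 := (BoundedFormula.realize_restrictFreeVar (φ := φ) (f := fun a => (a : Fin n ⊕ α))
      (v := Sum.elim x y) (xs := default) (Sum.elim x y) (fun _ => rfl))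
    have h2 := (BoundedFormula.realize_restrictFreeVar (φ := φ) (f := fun a => (a : Fin n ⊕ α))
      (v := Sum.elim x y) (xs := default)
      (Sum.elim x ((fun j => y (e.symm j)) ∘ k)) (fun a => by
        obtain ⟨a, ha⟩ := a
        rcases a with i | a
        · rfl
        · have hT : a ∈ T := Finset.mem_insert_of_mem (Finset.mem_toRight.2 ha)
          simp [k, hT]))
    exact h2.1 (h1.2 hy)

open Classical in
lemma finite_type {L : FirstOrder.Language.{u, v}} {M N : Type*} [L.Structure M] [L.Structure N]
    (h : AETheorySub L M N) {n : ℕ} {α : Type*} [Nonempty α]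
    (t : α → (Fin n → M) → M)
    (Φ : Finset {φ : L.Formula (Fin n ⊕ α) // φ.IsQF}) (b : Fin n → N) :
    ∃ (x : Fin n → M) (y : α → N), ∀ φ ∈ Φ,
      (φ.1.Realize (Sum.elim b y) ↔ φ.1.Realize (Sum.elim x (fun a => t a x))) := by
  let P : (Fin n → M) → Set Φ := fun x => {φ | φ.1.1.Realize (Sum.elim x (fun a => t a x))}
  let δ : Set Φ → Φ → L.Formula (Fin n ⊕ α) := fun S φ => if φ ∈ S then φ.1.1 else φ.1.1.not
  have hδ : ∀ S φ, (δ S φ).IsQF := by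
    intro S φ
    by_cases hS : φ ∈ S
    · simpa [δ, hS] using φ.1.2
    · simpa [δ, hS] using φ.1.2.not
  let Ψ : L.Formula (Fin n ⊕ α) :=
    BoundedFormula.iSup (fun S : Set.range P => BoundedFormula.iInf (fun φ => δ S.1 φ))
  have hΨ : Ψ.IsQF := qf_iSup _ fun S => qf_iInf _ fun φ => hδ _ _
  obtain ⟨y, hy⟩ := ae_transfer h Ψ hΨ (fun x => ⟨fun a => t a x, by
    refine BoundedFormula.realize_iSup.2 ⟨⟨P x, x, rfl⟩, BoundedFormula.realize_iInf.2 fun φ => ?_⟩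
    by_cases hS : φ ∈ P x
    · simp only [δ, hS, if_true]
      exact hS
    · simp only [δ, hS, if_false, BoundedFormula.realize_not]
      exact hS⟩) b
  obtain ⟨⟨S, x, rfl⟩, hS⟩ := BoundedFormula.realize_iSup.1 hy
  refine ⟨x, y, fun φ hφ => ?_⟩
  have := BoundedFormula.realize_iInf.1 hS ⟨φ, hφ⟩
  by_cases hS : (⟨φ, hφ⟩ : Φ) ∈ P x
  · simp only [δ, hS, if_true] at this
    exact iff_of_true this hS
  · simp only [δ, hS, if_false, BoundedFormula.realize_not] at this
    exact iff_of_false this hS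

/-- The diagonal elementary embedding into an ultrapower. -/
def diag {L : FirstOrder.Language.{u, v}} {M I : Type*} [L.Structure M] [Nonempty M]
    (U : Ultrafilter I) : M ↪ₑ[L] (U : Filter I).Product (fun _ => M) where
  toFun a := Quotient.mk'' (fun _ => a)
  map_formula' := by
    intro n φ x
    have := Ultraproduct.realize_formula_cast (u := U) (M := fun _ => M) φ (fun i _ => x i)
    simp only [eventually_const] at this
    exact this

lemma backward {L : FirstOrder.Language.{u, v}} {M : Type w} {N : Type x}
    [L.Structure M] [L.Structure N]
    (h : ∃ (N' : Type (max u v w x)) (_ : L.Structure N') (_ : N ↪ₑ[L] N'),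
        ∀ B : Finset N',
          ∃ (MB : Type (max u v w x)) (_ : L.Structure MB) (_ : M ↪ₑ[L] MB)
            (f : MB ↪[L] N'), ↑B ⊆ Set.range f) : AETheorySub L M N := by
  classical
  obtain ⟨N', _, j, h⟩ := h
  intro m s ψ hψ hM
  rw [j.map_sentence]
  rw [sub_iff]
  intro b
  obtain ⟨MB, _, i, f, hf⟩ := h (Finset.univ.image b)
  rw [i.map_sentence, sub_iff] at hM
  have : ∀ k, ∃ a, f a = b k := fun k => hf (by simp)
  choose a ha using this
  obtain ⟨y, hy⟩ := hM a
  refine ⟨f ∘ y, ?_⟩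
  rw [← hψ.realize_embedding f] at hy
  convert hy using 1
  funext k
  refine Fin.addCases (fun i => ?_) (fun i => ?_) k
  · simp [ha]
  · simp

lemma empty_iff {L : FirstOrder.Language.{u, v}} {M N : Type*} [L.Structure M] [L.Structure N]
    (h : AETheorySub L M N) : IsEmpty M ↔ IsEmpty N := by
  constructor
  · intro hM
    have := (sub_iff _).1 (h 1 0 ⊥ BoundedFormula.isQF_bot
      ((sub_iff _).2 fun x => (hM.false (x 0)).elim))
    refine ⟨fun a => ?_⟩
    obtain ⟨y, hy⟩ := this (fun _ => a)
    exact hy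
  · intro hN
    by_contra hM
    rw [not_isEmpty_iff] at hM
    obtain ⟨a⟩ := hM
    obtain ⟨y, hy⟩ := (sub_iff _).1 (h 0 1 ⊤ BoundedFormula.IsQF.top
      ((sub_iff _).2 fun x => ⟨fun _ => a, by simp⟩)) default
    exact hN.false (y 0)

lemma forward_empty {L : FirstOrder.Language.{u, v}} {M : Type w} {N : Type x}
    [L.Structure M] [L.Structure N] [hMe : IsEmpty M] [hNe : IsEmpty N] (h : AETheorySub L M N) :
    ∃ (N' : Type (max u v w x)) (_ : L.Structure N') (_ : N ↪ₑ[L] N'),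
        ∀ B : Finset N',
          ∃ (MB : Type (max u v w x)) (_ : L.Structure MB) (_ : M ↪ₑ[L] MB)
            (f : MB ↪[L] N'), ↑B ⊆ Set.range f := by
  have key : ∀ (R : L.Relations 0) (xM : Fin 0 → M) (xN : Fin 0 → N),
      Structure.RelMap R xN ↔ Structure.RelMap R xM := by
    intro R xM xN
    let ψ : L.BoundedFormula Empty (0 + 0) := R.boundedFormula (fun i => i.elim0)
    have hψ : ψ.IsQF := (BoundedFormula.IsAtomic.rel R _).isQF
    have hr : ∀ {K : Type w} [L.Structure K] (z : Fin (0 + 0) → K) (w : Fin 0 → K),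
        ψ.Realize default z ↔ Structure.RelMap R w := by
      intro K _ z w
      simp only [ψ, BoundedFormula.realize_rel]
      rw [iff_iff_eq]
      congr 1
      exact Subsingleton.elim _ _
    have hr' : ∀ {K : Type x} [L.Structure K] (z : Fin (0 + 0) → K) (w : Fin 0 → K),
        ψ.Realize default z ↔ Structure.RelMap R w := by
      intro K _ z w
      simp only [ψ, BoundedFormula.realize_rel]
      rw [iff_iff_eq]
      congr 1
      exact Subsingleton.elim _ _
    constructor
    · intro hN
      by_contra hM
      obtain ⟨y, hy⟩ := (sub_iff _).1 (h 0 0 ψ.not hψ.not ((sub_iff _).2 fun x => ⟨default, by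
        rw [BoundedFormula.realize_not, hr _ xM]; exact hM⟩)) default
      rw [BoundedFormula.realize_not, hr' _ xN] at hy
      exact hy hN
    · intro hM
      obtain ⟨y, hy⟩ := (sub_iff _).1 (h 0 0 ψ hψ ((sub_iff _).2 fun x => ⟨default, by
        rw [hr _ xM]; exact hM⟩)) default
      rwa [hr' _ xN] at hy
  let f0 : M ↪[L] N :=
    { toFun := fun a => hMe.elim a
      inj' := fun a => hMe.elim a
      map_fun' := fun f x => hMe.elim (Structure.funMap f x)
      map_rel' := by
        intro n R x
        cases n with
        | zero => exact key R _ _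
        | succ n => exact hMe.elim (x 0) }
  let eN : N ≃ ULift.{max u v w x} N := Equiv.ulift.symm
  let eM : M ≃ ULift.{max u v w x} M := Equiv.ulift.symm
  let _ := eN.inducedStructure (L := L)
  let _ := eM.inducedStructure (L := L)
  refine ⟨ULift.{max u v w x} N, inferInstance,
    (eN.inducedStructureEquiv (L := L)).toElementaryEmbedding, fun B =>
    ⟨ULift.{max u v w x} M, inferInstance, (eM.inducedStructureEquiv (L := L)).toElementaryEmbedding,
      (eN.inducedStructureEquiv (L := L)).toEmbedding.comp
        (f0.comp (eM.inducedStructureEquiv (L := L)).symm.toEmbedding), fun a => ?_⟩⟩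
  exact hNe.elim a.down

lemma forward {L : FirstOrder.Language.{u, v}} {M : Type w} {N : Type x}
    [L.Structure M] [L.Structure N] [Nonempty M] [Nonempty N] (h : AETheorySub L M N) :
    ∃ (N' : Type (max u v w x)) (_ : L.Structure N') (_ : N ↪ₑ[L] N'),
        ∀ B : Finset N',
          ∃ (MB : Type (max u v w x)) (_ : L.Structure MB) (_ : M ↪ₑ[L] MB)
            (f : MB ↪[L] N'), ↑B ⊆ Set.range f := by
  classical
  let F : ℕ → Type w := fun n => (Fin n → M) → M
  let C : ℕ → Type (max u v w) := fun n => {φ : L.Formula (Fin n ⊕ F n) // φ.IsQF}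
  let I : Type (max u v w) := Finset (Σ n, C n)
  let V : Ultrafilter I := Ultrafilter.of atTop
  have hV : ∀ {n} (c : C n), ∀ᶠ i : I in V, (⟨n, c⟩ : Σ n, C n) ∈ i := by
    intro n c
    refine (Ultrafilter.of_le (atTop : Filter I)) ?_
    filter_upwards [eventually_ge_atTop ({⟨n, c⟩} : Finset (Σ n, C n))] with i hi
    exact hi (Finset.mem_singleton_self _)
  have fin : ∀ (n : ℕ) (i : I) (b : Fin n → N), ∃ (x : Fin n → M) (y : F n → N),
      ∀ c : C n, (⟨n, c⟩ : Σ n, C n) ∈ i →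
      (c.1.Realize (Sum.elim b y) ↔ c.1.Realize (Sum.elim x (fun a => a x))) := by
    intro n i b
    obtain ⟨x, y, hxy⟩ := finite_type h (fun a : F n => a)
      (i.preimage (fun c : C n => (⟨n, c⟩ : Σ n, C n))
        (sigma_mk_injective.injOn)) b
    exact ⟨x, y, fun c hc => hxy c (Finset.mem_preimage.2 hc)⟩
  choose X Y hXY using fin
  refine ⟨(V : Filter I).Product (fun _ => N), inferInstance, diag V, fun B => ?_⟩
  let n := B.card
  let e : B ≃ Fin n := B.equivFin
  have rep : ∀ k : Fin n, ∃ r : I → N, (Quotient.mk'' r : (V : Filter I).Product (fun _ => N))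
      = (e.symm k).1 := fun k => Quotient.exists_rep _
  choose b hb using rep
  let ξ : I → (Fin n → M) := fun i => X n i (fun k => b k i)
  let η : F n → I → N := fun t i => Y n i (fun k => b k i) t
  have main : ∀ φ : L.Formula (Fin n ⊕ F n), φ.IsQF → ∀ᶠ i in V,
      (φ.Realize (Sum.elim (fun k => b k i) (fun t => η t i)) ↔
        φ.Realize (Sum.elim (ξ i) (fun a => a (ξ i)))) := by
    intro φ hφ
    filter_upwards [hV (⟨φ, hφ⟩ : C n)] with i hi
    exact hXY n i (fun k => b k i) ⟨φ, hφ⟩ hi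
  let U : Ultrafilter (Fin n → M) := V.map ξ
  have eqs : ∀ t t' : F n, (∀ᶠ x in U, t x = t' x) ↔ ∀ᶠ i in V, η t i = η t' i := by
    intro t t'
    have := main (Term.equal (Term.var (Sum.inr t)) (Term.var (Sum.inr t')))
      (BoundedFormula.IsAtomic.equal _ _).isQF
    simp only [Formula.realize_equal, Term.realize_var, Sum.elim_inr] at this
    exact (eventually_congr this).symm
  let P := (U : Filter (Fin n → M)).Product (fun _ => M)
  let f : P ↪[L] (V : Filter I).Product (fun _ => N) :=
    { toFun := Quotient.map' η (fun t t' htt => (eqs t t').1 htt)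
      inj' := by
        intro p q
        induction p using Quotient.inductionOn' with | _ t => ?_
        induction q using Quotient.inductionOn' with | _ t' => ?_
        intro hpq
        exact Quotient.sound' ((eqs t t').2 (Quotient.eq''.1 hpq))
      map_fun' := by
        intro k g p
        have : ∃ t : Fin k → F n, p = fun j => (Quotient.mk'' (t j) : P) := by
          choose t ht using fun j => Quotient.exists_rep (p j)
          exact ⟨t, funext fun j => (ht j).symm⟩
        obtain ⟨t, rfl⟩ := this
        have h1 := Ultraproduct.funMap_cast (u := U) (M := fun _ => M) g t
        have h2 := Ultraproduct.funMap_cast (u := V) (M := fun _ => N) g (fun j => η (t j))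
        refine (congrArg _ h1).trans (Eq.trans ?_ h2.symm)
        refine Quotient.sound' ?_
        have := main (Term.equal (Term.var (Sum.inr fun x => Structure.funMap g fun j => t j x))
          (Term.func g fun j => Term.var (Sum.inr (t j))))
          (BoundedFormula.IsAtomic.equal _ _).isQF
        simp only [Formula.realize_equal, Term.realize_var, Sum.elim_inr, Term.realize_func,
          iff_true] at this
        exact this
      map_rel' := by
        intro k R p
        have : ∃ t : Fin k → F n, p = fun j => (Quotient.mk'' (t j) : P) := by
          choose t ht using fun j => Quotient.exists_rep (p j)
          exact ⟨t, funext fun j => (ht j).symm⟩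
        obtain ⟨t, rfl⟩ := this
        have h1 := Ultraproduct.realize_formula_cast (u := U) (M := fun _ => M)
          (R.formula (fun j => Term.var j)) t
        have h2 := Ultraproduct.realize_formula_cast (u := V) (M := fun _ => N)
          (R.formula (fun j => Term.var j)) (fun j => η (t j))
        simp only [Formula.realize_rel, Term.realize_var] at h1 h2
        have := main (R.formula (fun j => Term.var (Sum.inr (t j))))
          (BoundedFormula.IsAtomic.rel _ _).isQF
        simp only [Formula.realize_rel, Term.realize_var, Sum.elim_inr] at this
        exact h2.trans ((eventually_congr this).trans h1.symm) }
  let eP : P ≃ ULift.{max u v w x} P := Equiv.ulift.symm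
  let _ := eP.inducedStructure (L := L)
  refine ⟨ULift.{max u v w x} P, inferInstance,
    (eP.inducedStructureEquiv (L := L)).toElementaryEmbedding.comp (diag U),
    f.comp (eP.inducedStructureEquiv (L := L)).symm.toEmbedding, fun z hz => ?_⟩
  let k : Fin n := e ⟨z, hz⟩
  let π : F n := fun x => x k
  refine ⟨ULift.up (Quotient.mk'' π), ?_⟩
  have h1 : (Quotient.mk'' (b k) : (V : Filter I).Product (fun _ => N)) = z := by
    exact (hb k).trans (congrArg Subtype.val (e.symm_apply_apply ⟨z, hz⟩))
  rw [← h1]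
  refine Quotient.sound' ?_
  have := main (Term.equal (Term.var (Sum.inr π)) (Term.var (Sum.inl k)))
          (BoundedFormula.IsAtomic.equal _ _).isQF
  simp only [Formula.realize_equal, Term.realize_var, Sum.elim_inr, Sum.elim_inl, π,
          iff_true] at this
  exact this

end AEProof

/-- `Th_{∀∃}(M) ⊆ Th_{∀∃}(N)` iff there is an elementary extension `N*` of `N`
such that for every finite subset `B ⊆ N*` there are an elementary extension `M_B ≽ M` and an
embedding `f_B : M_B ↪ N*` whose image contains `B`. -/
theorem stmt4 {L : FirstOrder.Language.{u, v}} {M : Type w} {N : Type x}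
    [L.Structure M] [L.Structure N] :
    AETheorySub L M N ↔
      ∃ (N' : Type (max u v w x)) (_ : L.Structure N') (_ : N ↪ₑ[L] N'),
        ∀ B : Finset N',
          ∃ (MB : Type (max u v w x)) (_ : L.Structure MB) (_ : M ↪ₑ[L] MB)
            (f : MB ↪[L] N'), ↑B ⊆ Set.range f := by
  refine ⟨fun h => ?_, AEProof.backward⟩
  rcases isEmpty_or_nonempty M with hM | hM
  · have := (AEProof.empty_iff h).1 hM
    exact AEProof.forward_empty h
  · have : Nonempty N := by
      by_contra hN
      rw [not_nonempty_iff, ← AEProof.empty_iff h] at hN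
      exact not_isEmpty_of_nonempty M hN
    exact AEProof.forward h
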